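/- arXiv:2106.01737 — 2 statements merged into one kernel-verified Lean document; each statement's English description precedes it below -/
import Mathlib

section
/- Let β ∈ [1,2). For every ε > 0 there exists K ∈ ℕ such that for all k ≥ K, the set of k-feasible pairs (c,b) ∈ C^{≤k}(β) is nonempty and G(β) ≤ min over k-feasible (c,b) ∈ C^{≤k}(β) of sup_{α ∈ A(c,b)} P(c,α) ≤ G(β) + ε. (That is, this minimum converges to G(β) as k → ∞.) -/
/-- The binary entropy function, `h(p) = p log₂(1/p) + (1-p) log₂(1/(1-p))`,
with the convention `h(0) = h(1) = 0` (automatic since `1/0 = 0` and `logb 2 0 = 0`). -/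
noncomputable def binH (p : ℝ) : ℝ :=
  p * Real.logb 2 (1 / p) + (1 - p) * Real.logb 2 (1 / (1 - p))

/-- `(c, b) ∈ C(β)`: `c : ℕ → [0,1]`, `∑ cᵢ/2ⁱ = 1/(β·2ᵇ)` and `∑ cᵢ ≤ 1`
(the latter expressed via partial sums, which is equivalent for nonnegative terms). -/
def memC (β : ℝ) (c : ℕ → ℝ) (b : ℕ) : Prop :=
  (∀ i, c i ∈ Set.Icc (0 : ℝ) 1) ∧
  (∑' i : ℕ, c i / 2 ^ i) = 1 / (β * 2 ^ b) ∧
  ∀ n : ℕ, (∑ i ∈ Finset.range n, c i) ≤ 1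

/-- `α ∈ A(c,b)`: `α : ℕ → [0,1]` with `∑ αᵢ cᵢ / 2ⁱ = 1/(β·2^{b+1})`. -/
def memA (β : ℝ) (b : ℕ) (c α : ℕ → ℝ) : Prop :=
  (∀ i, α i ∈ Set.Icc (0 : ℝ) 1) ∧
  (∑' i : ℕ, α i * c i / 2 ^ i) = 1 / (β * 2 ^ (b + 1))

/-- `P(c,α) = ∑ h(αᵢ)·cᵢ − h(∑ αᵢ·cᵢ)`. -/
noncomputable def Pfun (c α : ℕ → ℝ) : ℝ :=
  (∑' i : ℕ, binH (α i) * c i) - binH (∑' i : ℕ, α i * c i)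

/-- `sup_{α ∈ A(c,b)} P(c,α)`. -/
noncomputable def supP (β : ℝ) (b : ℕ) (c : ℕ → ℝ) : ℝ :=
  sSup {y | ∃ α, memA β b c α ∧ y = Pfun c α}

/-- `G(β) = inf_{(c,b) ∈ C(β)} sup_{α ∈ A(c,b)} P(c,α)`. -/
noncomputable def Gfun (β : ℝ) : ℝ :=
  sInf {y | ∃ c b, memC β c b ∧ y = supP β b c}

/-- `(c,b)` is `k`-feasible: `cᵢ · β · 2ᵏ ∈ ℕ` for every `i`. -/
def kFeasC (β : ℝ) (k : ℕ) (c : ℕ → ℝ) : Prop :=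
  ∀ i, ∃ m : ℕ, c i * (β * 2 ^ k) = m

/-- `α` is `k`-feasible (for `c`): `αᵢ · cᵢ · β · 2ᵏ ∈ ℕ` for every `i`, and if there is
a largest index `t` with `c t > 0` then `α t < 1`. -/
def kFeasA (β : ℝ) (k : ℕ) (c α : ℕ → ℝ) : Prop :=
  (∀ i, ∃ m : ℕ, α i * c i * (β * 2 ^ k) = m) ∧
  (∀ t, 0 < c t → (∀ i, t < i → c i = 0) → α t < 1)

/-!
The map `P` is uniformly continuous for the `ℓ¹` distance on `c` and the sup distance on `α`. When
`c` is perturbed by `d` in `ℓ¹`, a member of `A(c', b)` becomes a member of `A(c, b)` after moving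
each entry by `O(d)`, namely by mixing it with the constant sequence `0` or `1`. Hence
`sup_α P(c, α)` is upper semicontinuous in `c` for fixed `b`, and it suffices to approximate a
nearly optimal `(c, b)` in `ℓ¹` by `k`-feasible pairs: round each `cᵢ / 2ⁱ` with `i ≤ k` down to a
multiple of `1 / (β·2ᵏ)`, drop the remaining entries, and put the lost weighted mass on index `0`.
Since `1 / (β·2ᵇ)` is itself a multiple of `1 / (β·2ᵏ)` for `k ≥ b`, so is that mass.
-/

open Filter Topology

theorem binH_eq_binEntropy_div (p : ℝ) : binH p = Real.binEntropy p / Real.log 2 := by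
  simp only [binH, Real.binEntropy, Real.logb, one_div]
  ring

theorem continuous_binH : Continuous binH := by
  rw [funext binH_eq_binEntropy_div]
  fun_prop

theorem binH_mem_Icc {p : ℝ} (hp : p ∈ Set.Icc (0 : ℝ) 1) : binH p ∈ Set.Icc (0 : ℝ) 1 := by
  have hlog : 0 < Real.log 2 := Real.log_pos one_lt_two
  rw [binH_eq_binEntropy_div]
  exact ⟨div_nonneg (Real.binEntropy_nonneg hp.1 hp.2) hlog.le,
    (div_le_one hlog).2 Real.binEntropy_le_log_two⟩

theorem uniformContinuousOn_binH : UniformContinuousOn binH (Set.Icc 0 1) :=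
  isCompact_Icc.uniformContinuousOn_of_continuous continuous_binH.continuousOn

/-- Sub-probability weights: nonnegative weights of total mass at most `1`. Together with the
weighted-sum constraint they make up `memC`, see `memC_iff`. -/
structure IsSubprobability {ι : Type*} (c : ι → ℝ) : Prop where
  nonneg : ∀ i, 0 ≤ c i
  summable : Summable c
  tsum_le_one : ∑' i, c i ≤ 1

namespace IsSubprobability

section Weights

variable {ι : Type*} {c c' a a' : ι → ℝ}

theorem summable_mul (hc : IsSubprobability c) (ha : ∀ i, a i ∈ Set.Icc (0 : ℝ) 1) :
    Summable fun i => a i * c i :=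
  hc.summable.of_nonneg_of_le (fun i => mul_nonneg (ha i).1 (hc.nonneg i))
    fun i => mul_le_of_le_one_left (hc.nonneg i) (ha i).2

theorem tsum_mul_mem_Icc (hc : IsSubprobability c) (ha : ∀ i, a i ∈ Set.Icc (0 : ℝ) 1) :
    ∑' i, a i * c i ∈ Set.Icc (0 : ℝ) 1 :=
  ⟨tsum_nonneg fun i => mul_nonneg (ha i).1 (hc.nonneg i),
    ((hc.summable_mul ha).tsum_le_tsum (fun i => mul_le_of_le_one_left (hc.nonneg i) (ha i).2)
      hc.summable).trans hc.tsum_le_one⟩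

theorem abs_tsum_mul_sub_tsum_mul_le (hc : IsSubprobability c) (hc' : IsSubprobability c')
    (ha : ∀ i, a i ∈ Set.Icc (0 : ℝ) 1) (ha' : ∀ i, a' i ∈ Set.Icc (0 : ℝ) 1)
    {e : ℝ} (he : 0 ≤ e) (haa' : ∀ i, |a i - a' i| ≤ e) :
    |∑' i, a i * c i - ∑' i, a' i * c' i| ≤ e + ∑' i, |c i - c' i| := by
  have hdist : Summable fun i => |c i - c' i| := (hc.summable.sub hc'.summable).abs
  have hec : Summable fun i => e * c i := hc.summable.mul_left e
  have hterm : ∀ i, |a i * c i - a' i * c' i| ≤ e * c i + |c i - c' i| := fun i =>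
    calc |a i * c i - a' i * c' i| = |(a i - a' i) * c i + a' i * (c i - c' i)| := by ring_nf
      _ ≤ |(a i - a' i) * c i| + |a' i * (c i - c' i)| := abs_add_le _ _
      _ = |a i - a' i| * c i + a' i * |c i - c' i| := by
        rw [abs_mul, abs_mul, abs_of_nonneg (hc.nonneg i), abs_of_nonneg (ha' i).1]
      _ ≤ e * c i + |c i - c' i| := add_le_add (mul_le_mul_of_nonneg_right (haa' i) (hc.nonneg i))
        (mul_le_of_le_one_left (abs_nonneg _) (ha' i).2)
  rw [← (hc.summable_mul ha).tsum_sub (hc'.summable_mul ha')]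
  calc |∑' i, (a i * c i - a' i * c' i)| ≤ ∑' i, (e * c i + |c i - c' i|) :=
        Real.norm_eq_abs _ ▸ tsum_of_norm_bounded (hec.add hdist).hasSum hterm
    _ = e * ∑' i, c i + ∑' i, |c i - c' i| := by rw [hec.tsum_add hdist, tsum_mul_left]
    _ ≤ e + ∑' i, |c i - c' i| := by
        gcongr
        exact mul_le_of_le_one_right he hc.tsum_le_one

end Weights

theorem Pfun_mem_Icc {c α : ℕ → ℝ} (hc : IsSubprobability c)
    (hα : ∀ i, α i ∈ Set.Icc (0 : ℝ) 1) : Pfun c α ∈ Set.Icc (-1 : ℝ) 1 := by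
  obtain ⟨hmean₀, hmean₁⟩ := hc.tsum_mul_mem_Icc fun i => binH_mem_Icc (hα i)
  obtain ⟨hbar₀, hbar₁⟩ := binH_mem_Icc (hc.tsum_mul_mem_Icc hα)
  rw [Pfun]
  constructor <;> linarith

end IsSubprobability

theorem exists_forall_abs_Pfun_sub_le {ε : ℝ} (hε : 0 < ε) :
    ∃ δ > 0, ∀ {c c' a a' : ℕ → ℝ}, IsSubprobability c → IsSubprobability c' →
      (∀ i, a i ∈ Set.Icc (0 : ℝ) 1) → (∀ i, a' i ∈ Set.Icc (0 : ℝ) 1) →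
      (∀ i, |a i - a' i| ≤ δ) → ∑' i, |c i - c' i| ≤ δ → |Pfun c a - Pfun c' a'| ≤ ε := by
  obtain ⟨η, hη, hbinH⟩ := Metric.uniformContinuousOn_iff.1 uniformContinuousOn_binH (ε / 3)
    (by positivity)
  simp only [Real.dist_eq] at hbinH
  refine ⟨min (ε / 3) (η / 3), by positivity, fun {c c' a a'} hc hc' ha ha' haa' hcc' => ?_⟩
  obtain ⟨hcε, hcη⟩ := le_min_iff.1 hcc'
  have haη : ∀ i, |a i - a' i| ≤ η / 3 := fun i => (haa' i).trans (min_le_right _ _)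
  have hmean : |∑' i, binH (a i) * c i - ∑' i, binH (a' i) * c' i| ≤
      ε / 3 + ∑' i, |c i - c' i| :=
    hc.abs_tsum_mul_sub_tsum_mul_le hc' (fun i => binH_mem_Icc (ha i))
      (fun i => binH_mem_Icc (ha' i)) (by positivity)
      fun i => (hbinH _ (ha i) _ (ha' i) (by linarith [haη i])).le
  have hbar : |∑' i, a i * c i - ∑' i, a' i * c' i| ≤ η / 3 + ∑' i, |c i - c' i| :=
    hc.abs_tsum_mul_sub_tsum_mul_le hc' ha ha' (by positivity) haη
  have hbinH_bar := hbinH _ (hc.tsum_mul_mem_Icc ha) _ (hc'.tsum_mul_mem_Icc ha') (by linarith)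
  rw [Pfun, Pfun, sub_sub_sub_comm]
  exact (abs_sub _ _).trans (by linarith)

theorem exists_hasSum_mul_abs_sub_le {ι : Type*} {w a : ι → ℝ} {S T : ℝ} (hT : 0 < T)
    (hw : HasSum w (2 * T)) (ha : ∀ i, a i ∈ Set.Icc (0 : ℝ) 1)
    (haw : HasSum (fun i => a i * w i) S) :
    ∃ α : ι → ℝ, (∀ i, α i ∈ Set.Icc (0 : ℝ) 1) ∧ HasSum (fun i => α i * w i) T ∧
      ∀ i, |α i - a i| ≤ |S - T| / T := by
  set d := |S - T|
  have hd : 0 ≤ d := abs_nonneg _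
  -- With `p = 0` if `T ≤ S` and `p = 1` otherwise, the weighted sum `2 * T * p` of the constant `p`
  -- lies beyond `T` at distance `T + d` from `S`, so mixing in `p` with weight `d / (T + d)` gives
  -- exactly `T`.
  obtain ⟨p, hp, hpS⟩ : ∃ p ∈ Set.Icc (0 : ℝ) 1, (T + d) * (S - T) = d * (S - 2 * T * p) := by
    rcases le_total T S with hTS | hST
    · exact ⟨0, by simp, by simp only [d, abs_of_nonneg (sub_nonneg.2 hTS)]; ring⟩
    · exact ⟨1, by simp, by simp only [d, abs_of_nonpos (sub_nonpos.2 hST)]; ring⟩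
  set t := d / (T + d)
  have ht₀ : 0 ≤ t := by positivity
  have ht₁ : t ≤ 1 := (div_le_one (by positivity)).2 (by linarith)
  refine ⟨fun i => (1 - t) * a i + t * p, fun i => ?_, ?_, fun i => ?_⟩
  · exact convex_Icc (0 : ℝ) 1 (ha i) hp (sub_nonneg.2 ht₁) ht₀ (sub_add_cancel 1 t)
  · have hmass : (1 - t) * S + t * p * (2 * T) = T := by
      simp only [t]
      field_simp
      linarith
    rw [← hmass]
    exact ((haw.mul_left (1 - t)).add (hw.mul_left (t * p))).congr_fun fun i => by ring
  · calc |(1 - t) * a i + t * p - a i| = t * |p - a i| := by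
          rw [show (1 - t) * a i + t * p - a i = t * (p - a i) by ring, abs_mul, abs_of_nonneg ht₀]
      _ ≤ t := mul_le_of_le_one_right ht₀
          (abs_sub_le_iff.2 ⟨by linarith [hp.2, (ha i).1], by linarith [hp.1, (ha i).2]⟩)
      _ ≤ d / T := div_le_div_of_nonneg_left hd hT (by linarith)

theorem summable_div_two_pow {c : ℕ → ℝ} (hc : Summable c) : Summable fun i => c i / 2 ^ i :=
  hc.abs.of_norm_bounded fun i => by
    rw [Real.norm_eq_abs, abs_div, abs_of_pos (by positivity : (0 : ℝ) < 2 ^ i)]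
    exact div_le_self (abs_nonneg _) (one_le_pow₀ one_le_two)

theorem tsum_div_two_pow_le {c : ℕ → ℝ} (hc : Summable c) (hc₀ : ∀ i, 0 ≤ c i) :
    ∑' i, c i / 2 ^ i ≤ ∑' i, c i :=
  (summable_div_two_pow hc).tsum_le_tsum
    (fun i => div_le_self (hc₀ i) (one_le_pow₀ one_le_two)) hc

theorem memC_iff {β : ℝ} {b : ℕ} {c : ℕ → ℝ} :
    memC β c b ↔ IsSubprobability c ∧ ∑' i, c i / 2 ^ i = 1 / (β * 2 ^ b) := by
  constructor
  · rintro ⟨hIcc, hweighted, hsum⟩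
    have hs : Summable c := summable_of_sum_range_le (fun i => (hIcc i).1) hsum
    exact ⟨⟨fun i => (hIcc i).1, hs, hs.tsum_le_of_sum_range_le hsum⟩, hweighted⟩
  · rintro ⟨hc, hweighted⟩
    refine ⟨fun i => ⟨hc.nonneg i, ?_⟩, hweighted, fun n => ?_⟩
    · exact (hc.summable.le_tsum i fun j _ => hc.nonneg j).trans hc.tsum_le_one
    · exact (hc.summable.sum_le_tsum _ fun j _ => hc.nonneg j).trans hc.tsum_le_one

namespace memC

variable {β : ℝ} {b : ℕ} {c c' : ℕ → ℝ}

theorem isSubprobability (hc : memC β c b) : IsSubprobability c :=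
  (memC_iff.1 hc).1

theorem hasSum_div_two_pow (hc : memC β c b) :
    HasSum (fun i => c i / 2 ^ i) (1 / (β * 2 ^ b)) :=
  hc.2.1 ▸ (summable_div_two_pow hc.isSubprobability.summable).hasSum

theorem memA_half (hc : memC β c b) : memA β b c fun _ => 1 / 2 := by
  refine ⟨fun _ => by norm_num, ?_⟩
  simp_rw [mul_div_assoc]
  rw [tsum_mul_left, hc.2.1, pow_succ]
  ring

theorem Pfun_le_supP (hc : memC β c b) {α : ℕ → ℝ} (hα : memA β b c α) :
    Pfun c α ≤ supP β b c := by
  refine le_csSup ⟨1, ?_⟩ ⟨α, hα, rfl⟩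
  rintro _ ⟨α, hα, rfl⟩
  exact (hc.isSubprobability.Pfun_mem_Icc hα.1).2

theorem neg_one_le_supP (hc : memC β c b) : -1 ≤ supP β b c :=
  (hc.isSubprobability.Pfun_mem_Icc hc.memA_half.1).1.trans (hc.Pfun_le_supP hc.memA_half)

theorem abs_tsum_mul_div_two_pow_sub_le (hc : memC β c b) (hc' : memC β c' b) {a : ℕ → ℝ}
    (ha : memA β b c' a) :
    |∑' i, a i * (c i / 2 ^ i) - 1 / (β * 2 ^ (b + 1))| ≤ ∑' i, |c i - c' i| := by
  have haw : ∀ i, a i / 2 ^ i ∈ Set.Icc (0 : ℝ) 1 := fun i =>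
    ⟨div_nonneg (ha.1 i).1 (by positivity),
      (div_le_self (ha.1 i).1 (one_le_pow₀ one_le_two)).trans (ha.1 i).2⟩
  have h := hc.isSubprobability.abs_tsum_mul_sub_tsum_mul_le hc'.isSubprobability haw haw le_rfl
    fun i => by rw [sub_self, abs_zero]
  simp only [zero_add, div_mul_eq_mul_div] at h
  simpa only [mul_div_assoc', ha.2] using h

theorem exists_memA_abs_sub_le (hβ : 0 < β) (hc : memC β c b) (hc' : memC β c' b) {a : ℕ → ℝ}
    (ha : memA β b c' a) :
    ∃ α, memA β b c α ∧ ∀ i, |α i - a i| ≤ (∑' i, |c i - c' i|) * (β * 2 ^ (b + 1)) := by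
  have hT : 0 < 1 / (β * 2 ^ (b + 1)) := by positivity
  have hw : HasSum (fun i => c i / 2 ^ i) (2 * (1 / (β * 2 ^ (b + 1)))) := by
    convert hc.hasSum_div_two_pow using 1
    rw [pow_succ]
    field_simp
  have haw : Summable fun i => a i * (c i / 2 ^ i) := by
    simpa only [mul_div_assoc] using
      summable_div_two_pow (hc.isSubprobability.summable_mul ha.1)
  obtain ⟨α, hα, hαsum, hαa⟩ := exists_hasSum_mul_abs_sub_le hT hw ha.1 haw.hasSum
  refine ⟨α, ⟨hα, ?_⟩, fun i => (hαa i).trans ?_⟩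
  · simpa only [mul_div_assoc] using hαsum.tsum_eq
  · rw [div_div_eq_mul_div, div_one]
    gcongr
    exact hc.abs_tsum_mul_div_two_pow_sub_le hc' ha

theorem exists_forall_supP_le_add (hβ : 0 < β) (hc : memC β c b) {ε : ℝ} (hε : 0 < ε) :
    ∃ δ > 0, ∀ c', memC β c' b → ∑' i, |c i - c' i| ≤ δ → supP β b c' ≤ supP β b c + ε := by
  obtain ⟨δ, hδ, hP⟩ := exists_forall_abs_Pfun_sub_le hε
  have hT : 0 < β * 2 ^ (b + 1) := by positivity
  refine ⟨min δ (δ / (β * 2 ^ (b + 1))), by positivity, fun c' hc' hcc' => ?_⟩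
  obtain ⟨hccδ, hccT⟩ := le_min_iff.1 hcc'
  refine csSup_le ⟨_, _, hc'.memA_half, rfl⟩ ?_
  rintro _ ⟨a, ha, rfl⟩
  obtain ⟨α, hα, hαa⟩ := hc.exists_memA_abs_sub_le hβ hc' ha
  have hPfun : |Pfun c α - Pfun c' a| ≤ ε :=
    hP hc.isSubprobability hc'.isSubprobability hα.1 ha.1
      (fun i => (hαa i).trans ((le_div_iff₀ hT).1 hccT)) hccδ
  linarith [(abs_le.1 hPfun).1, hc.Pfun_le_supP hα]

end memC

theorem exists_memC {β : ℝ} (hβ : 0 < β) : ∃ c b, memC β c b := by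
  obtain ⟨b, hb⟩ := pow_unbounded_of_one_lt (1 / β) one_lt_two
  have hsum := hasSum_pi_single (0 : ℕ) (1 / (β * 2 ^ b))
  refine ⟨Pi.single 0 (1 / (β * 2 ^ b)), b, memC_iff.2 ⟨⟨?_, hsum.summable, ?_⟩, ?_⟩⟩
  · exact (Pi.single_nonneg (α := fun _ : ℕ => ℝ)).2 (by positivity)
  · rw [hsum.tsum_eq, div_le_one (by positivity)]
    exact ((div_lt_iff₀' hβ).1 hb).le
  · rw [tsum_eq_single 0 fun i hi => by rw [Pi.single_eq_of_ne hi, zero_div], Pi.single_eq_same,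
      pow_zero, div_one]

/-- The sequence `f` with the weighted mass it lacks compared with `c` added at index `0`, where
the weight `1 / 2ⁱ` is `1`, so that `∑ cᵢ / 2ⁱ` is restored. -/
noncomputable def topUp (c f : ℕ → ℝ) : ℕ → ℝ :=
  f + Pi.single 0 (∑' i, (c i - f i) / 2 ^ i)

section topUp

variable {c f : ℕ → ℝ}

theorem topUp_zero : topUp c f 0 = f 0 + ∑' i, (c i - f i) / 2 ^ i := by
  rw [topUp, Pi.add_apply, Pi.single_eq_same]

theorem topUp_of_ne_zero {i : ℕ} (hi : i ≠ 0) : topUp c f i = f i := by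
  rw [topUp, Pi.add_apply, Pi.single_eq_of_ne hi, add_zero]

theorem hasSum_topUp (hf : Summable f) :
    HasSum (topUp c f) (∑' i, f i + ∑' i, (c i - f i) / 2 ^ i) :=
  hf.hasSum.add (hasSum_pi_single 0 _)

theorem tsum_topUp_div_two_pow (hc : Summable c) (hf : Summable f) :
    ∑' i, topUp c f i / 2 ^ i = ∑' i, c i / 2 ^ i := by
  set D := ∑' i, (c i - f i) / 2 ^ i with hD
  have hterm : ∀ i, topUp c f i / 2 ^ i = f i / 2 ^ i + (Pi.single 0 D : ℕ → ℝ) i := fun i => by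
    rcases eq_or_ne i 0 with rfl | hi
    · rw [topUp_zero, Pi.single_eq_same, pow_zero, div_one, div_one]
    · rw [topUp_of_ne_zero hi, Pi.single_eq_of_ne hi, add_zero]
  have hsub : D = ∑' i, c i / 2 ^ i - ∑' i, f i / 2 ^ i := by
    simp only [hD, sub_div]
    exact (summable_div_two_pow hc).tsum_sub (summable_div_two_pow hf)
  rw [tsum_congr hterm, (summable_div_two_pow hf).tsum_add (hasSum_pi_single 0 D).summable,
    tsum_pi_single, hsub, add_sub_cancel]

theorem tsum_sub_div_two_pow_le (hc : Summable c) (hf : Summable f) (hfc : ∀ i, f i ≤ c i) :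
    ∑' i, (c i - f i) / 2 ^ i ≤ ∑' i, c i - ∑' i, f i :=
  (tsum_div_two_pow_le (hc.sub hf) fun i => sub_nonneg.2 (hfc i)).trans_eq (hc.tsum_sub hf)

theorem tsum_sub_div_two_pow_nonneg (hfc : ∀ i, f i ≤ c i) : 0 ≤ ∑' i, (c i - f i) / 2 ^ i :=
  tsum_nonneg fun i => div_nonneg (sub_nonneg.2 (hfc i)) (by positivity)

theorem le_topUp (hfc : ∀ i, f i ≤ c i) (i : ℕ) : f i ≤ topUp c f i :=
  le_add_of_nonneg_right
    ((Pi.single_nonneg (α := fun _ : ℕ => ℝ)).2 (tsum_sub_div_two_pow_nonneg hfc) i)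

theorem isSubprobability_topUp (hc : IsSubprobability c) (hf₀ : ∀ i, 0 ≤ f i)
    (hfc : ∀ i, f i ≤ c i) : IsSubprobability (topUp c f) := by
  have hf : Summable f := hc.summable.of_nonneg_of_le hf₀ hfc
  refine ⟨fun i => (hf₀ i).trans (le_topUp hfc i), (hasSum_topUp hf).summable, ?_⟩
  rw [(hasSum_topUp hf).tsum_eq]
  linarith [tsum_sub_div_two_pow_le hc.summable hf hfc, hc.tsum_le_one]

theorem memC_topUp {β : ℝ} {b : ℕ} (hc : memC β c b) (hf₀ : ∀ i, 0 ≤ f i)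
    (hfc : ∀ i, f i ≤ c i) : memC β (topUp c f) b := by
  have hs : Summable c := hc.isSubprobability.summable
  exact memC_iff.2 ⟨isSubprobability_topUp hc.isSubprobability hf₀ hfc,
    (tsum_topUp_div_two_pow hs (hs.of_nonneg_of_le hf₀ hfc)).trans hc.2.1⟩

theorem tsum_abs_sub_topUp_le (hc : Summable c) (hf : Summable f) (hfc : ∀ i, f i ≤ c i) :
    ∑' i, |c i - topUp c f i| ≤ 2 * ∑' i, (c i - f i) := by
  have htop : Summable (topUp c f) := (hasSum_topUp hf).summable
  calc ∑' i, |c i - topUp c f i| ≤ ∑' i, ((c i - f i) + (topUp c f i - f i)) :=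
        (hc.sub htop).abs.tsum_le_tsum
          (fun i => abs_le.2 (by constructor <;> linarith [hfc i, le_topUp hfc i]))
          ((hc.sub hf).add (htop.sub hf))
    _ = ∑' i, (c i - f i) + ∑' i, (c i - f i) / 2 ^ i := by
        rw [(hc.sub hf).tsum_add (htop.sub hf), htop.tsum_sub hf, (hasSum_topUp hf).tsum_eq,
          add_sub_cancel_left]
    _ ≤ 2 * ∑' i, (c i - f i) := by
        rw [hc.tsum_sub hf, two_mul]
        gcongr
        exact tsum_sub_div_two_pow_le hc hf hfc

end topUp

/-- The numerator over `β·2ᵏ` of `cᵢ / 2ⁱ` rounded down, and `0` for the dropped indices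
`i > k`. -/
noncomputable def floorNum (β : ℝ) (c : ℕ → ℝ) (k i : ℕ) : ℕ :=
  if i ≤ k then ⌊c i / 2 ^ i * (β * 2 ^ k)⌋₊ else 0

/-- The truncation of `c` to the indices `i ≤ k` in which each weighted term `cᵢ / 2ⁱ` is rounded
down to a multiple of `1 / (β·2ᵏ)`. -/
noncomputable def floorSeq (β : ℝ) (c : ℕ → ℝ) (k i : ℕ) : ℝ :=
  floorNum β c k i / (β * 2 ^ k) * 2 ^ i

section floorSeq

variable {β : ℝ} {c : ℕ → ℝ} {k : ℕ}

theorem floorNum_of_lt {i : ℕ} (hi : k < i) : floorNum β c k i = 0 :=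
  if_neg hi.not_ge

theorem floorSeq_of_lt {i : ℕ} (hi : k < i) : floorSeq β c k i = 0 := by
  rw [floorSeq, floorNum_of_lt hi, Nat.cast_zero, zero_div, zero_mul]

theorem floorSeq_div_two_pow (i : ℕ) :
    floorSeq β c k i / 2 ^ i = floorNum β c k i / (β * 2 ^ k) :=
  mul_div_cancel_right₀ _ (by positivity)

theorem floorSeq_nonneg (hβ : 0 ≤ β) (i : ℕ) : 0 ≤ floorSeq β c k i := by
  unfold floorSeq
  positivity

theorem floorSeq_le (hβ : 0 < β) (hc : ∀ i, 0 ≤ c i) (i : ℕ) : floorSeq β c k i ≤ c i := by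
  rcases le_or_gt i k with hi | hi
  · rw [← div_le_div_iff_of_pos_right (by positivity : (0 : ℝ) < 2 ^ i), floorSeq_div_two_pow,
      div_le_iff₀ (by positivity), floorNum, if_pos hi]
    have := hc i
    exact Nat.floor_le (by positivity)
  · exact (floorSeq_of_lt hi).trans_le (hc i)

theorem tsum_floorSeq_div_two_pow :
    ∑' i, floorSeq β c k i / 2 ^ i =
      (∑ i ∈ Finset.range (k + 1), floorNum β c k i : ℕ) / (β * 2 ^ k) := by
  simp only [floorSeq_div_two_pow]
  rw [tsum_div_const, tsum_eq_sum, Nat.cast_sum]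
  intro i hi
  rw [floorNum_of_lt (by simpa using hi), Nat.cast_zero]

theorem tendsto_floorSeq (hβ : 0 < β) (hc : ∀ i, 0 ≤ c i) (i : ℕ) :
    Tendsto (fun k => floorSeq β c k i) atTop (𝓝 (c i)) := by
  have hscale : Tendsto (fun k : ℕ => β * (2 : ℝ) ^ k) atTop atTop :=
    (tendsto_pow_atTop_atTop_of_one_lt one_lt_two).const_mul_atTop hβ
  have hfloor := ((tendsto_nat_floor_mul_div_atTop
    (div_nonneg (hc i) (pow_nonneg zero_le_two i))).comp hscale).mul_const (2 ^ i)
  rw [div_mul_cancel₀ _ (by positivity)] at hfloor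
  refine hfloor.congr' ?_
  filter_upwards [eventually_ge_atTop i] with k hk
  rw [floorSeq, floorNum, if_pos hk, Function.comp_apply]

theorem tendsto_tsum_sub_floorSeq (hβ : 0 < β) (hc₀ : ∀ i, 0 ≤ c i) (hc : Summable c) :
    Tendsto (fun k => ∑' i, (c i - floorSeq β c k i)) atTop (𝓝 0) := by
  rw [← tsum_zero (α := ℝ) (β := ℕ)]
  refine tendsto_tsum_of_dominated_convergence hc (fun i => ?_) (.of_forall fun k i => ?_)
  · simpa only [sub_self] using (tendsto_floorSeq hβ hc₀ i).const_sub (c i)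
  · rw [Real.norm_of_nonneg (sub_nonneg.2 (floorSeq_le hβ hc₀ i))]
    exact sub_le_self _ (floorSeq_nonneg hβ.le i)

end floorSeq

namespace memC

variable {β : ℝ} {b k : ℕ} {c : ℕ → ℝ}

theorem exists_nat_tsum_sub_floorSeq_eq (hβ : 0 < β) (hc : memC β c b) (hbk : b ≤ k) :
    ∃ r : ℕ, ∑' i, (c i - floorSeq β c k i) / 2 ^ i = r / (β * 2 ^ k) := by
  have hc₀ := hc.isSubprobability.nonneg
  have hs : Summable c := hc.isSubprobability.summable
  have hf : Summable (floorSeq β c k) :=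
    hs.of_nonneg_of_le (floorSeq_nonneg hβ.le) (floorSeq_le hβ hc₀)
  set n := ∑ i ∈ Finset.range (k + 1), floorNum β c k i with hn
  have hmass : ∑' i, (c i - floorSeq β c k i) / 2 ^ i =
      ((2 ^ (k - b) : ℕ) - n : ℝ) / (β * 2 ^ k) := by
    simp only [sub_div]
    rw [(summable_div_two_pow hs).tsum_sub (summable_div_two_pow hf), hc.2.1,
      tsum_floorSeq_div_two_pow, ← hn, ← Nat.add_sub_cancel' hbk, Nat.add_sub_cancel_left, pow_add]
    push_cast
    field_simp
  have hle : n ≤ 2 ^ (k - b) := by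
    have h := tsum_sub_div_two_pow_nonneg (floorSeq_le (k := k) hβ hc₀)
    rw [hmass, le_div_iff₀ (by positivity), zero_mul, sub_nonneg] at h
    exact_mod_cast h
  exact ⟨2 ^ (k - b) - n, by rw [hmass, Nat.cast_sub hle]⟩

theorem kFeasC_topUp_floorSeq (hβ : 0 < β) (hc : memC β c b) (hbk : b ≤ k) :
    kFeasC β k (topUp c (floorSeq β c k)) := by
  have hfloor : ∀ i, floorSeq β c k i * (β * 2 ^ k) = (floorNum β c k i * 2 ^ i : ℕ) := fun i => by
    rw [floorSeq]
    push_cast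
    field_simp
  obtain ⟨r, hr⟩ := hc.exists_nat_tsum_sub_floorSeq_eq hβ hbk
  intro i
  rcases eq_or_ne i 0 with rfl | hi
  · refine ⟨floorNum β c k 0 * 2 ^ 0 + r, ?_⟩
    rw [topUp_zero, add_mul, hfloor, hr, div_mul_cancel₀ _ (by positivity), ← Nat.cast_add]
  · exact ⟨_, by rw [topUp_of_ne_zero hi, hfloor]⟩

theorem tendsto_tsum_abs_sub_topUp_floorSeq (hβ : 0 < β) (hc : memC β c b) :
    Tendsto (fun k => ∑' i, |c i - topUp c (floorSeq β c k) i|) atTop (𝓝 0) := by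
  have hc₀ := hc.isSubprobability.nonneg
  have hs : Summable c := hc.isSubprobability.summable
  refine squeeze_zero (fun k => tsum_nonneg fun i => abs_nonneg _) (fun k => ?_)
    (by simpa only [mul_zero] using (tendsto_tsum_sub_floorSeq hβ hc₀ hs).const_mul 2)
  exact tsum_abs_sub_topUp_le hs
    (hs.of_nonneg_of_le (floorSeq_nonneg hβ.le) (floorSeq_le hβ hc₀)) (floorSeq_le hβ hc₀)

theorem eventually_exists_kFeasC_supP_le_add (hβ : 0 < β) (hc : memC β c b) {ε : ℝ}
    (hε : 0 < ε) :
    ∀ᶠ k in atTop, ∃ c', memC β c' b ∧ (∀ i, k < i → c' i = 0) ∧ kFeasC β k c' ∧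
      supP β b c' ≤ supP β b c + ε := by
  obtain ⟨δ, hδ, hsup⟩ := hc.exists_forall_supP_le_add hβ hε
  filter_upwards [eventually_ge_atTop b,
    (hc.tendsto_tsum_abs_sub_topUp_floorSeq hβ).eventually_le_const hδ] with k hbk hclose
  have hmem : memC β (topUp c (floorSeq β c k)) b :=
    memC_topUp hc (floorSeq_nonneg hβ.le) (floorSeq_le hβ hc.isSubprobability.nonneg)
  refine ⟨_, hmem, fun i hi => ?_, hc.kFeasC_topUp_floorSeq hβ hbk, hsup _ hmem hclose⟩
  rw [topUp_of_ne_zero (Nat.ne_zero_of_lt hi), floorSeq_of_lt hi]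

end memC

theorem bddBelow_supP (β : ℝ) : BddBelow {y | ∃ c b, memC β c b ∧ y = supP β b c} := by
  refine ⟨-1, ?_⟩
  rintro _ ⟨c, b, hc, rfl⟩
  exact hc.neg_one_le_supP

theorem exists_memC_supP_lt {β : ℝ} (hβ : 0 < β) {ε : ℝ} (hε : 0 < ε) :
    ∃ c b, memC β c b ∧ supP β b c < Gfun β + ε := by
  obtain ⟨c₀, b₀, hc₀⟩ := exists_memC hβ
  obtain ⟨_, ⟨c, b, hc, rfl⟩, hlt⟩ := exists_lt_of_csInf_lt
    (s := {y | ∃ c b, memC β c b ∧ y = supP β b c}) ⟨_, c₀, b₀, hc₀, rfl⟩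
    (lt_add_of_pos_right (Gfun β) hε)
  exact ⟨c, b, hc, hlt⟩

theorem lim_min_kfeasible_general {β : ℝ} (hβ : 0 < β) :
    ∀ ε > (0 : ℝ), ∃ K : ℕ, ∀ k : ℕ, K ≤ k →
      (∃ c : ℕ → ℝ, ∃ b : ℕ, memC β c b ∧ (∀ i, k < i → c i = 0) ∧ kFeasC β k c) ∧
      Gfun β ≤ sInf {y | ∃ c : ℕ → ℝ, ∃ b : ℕ, memC β c b ∧ (∀ i, k < i → c i = 0) ∧
        kFeasC β k c ∧ y = supP β b c} ∧
      sInf {y | ∃ c : ℕ → ℝ, ∃ b : ℕ, memC β c b ∧ (∀ i, k < i → c i = 0) ∧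
        kFeasC β k c ∧ y = supP β b c} ≤ Gfun β + ε := by
  intro ε hε
  obtain ⟨c, b, hc, hlt⟩ := exists_memC_supP_lt hβ (half_pos hε)
  obtain ⟨K, hK⟩ := eventually_atTop.1 (hc.eventually_exists_kFeasC_supP_le_add hβ (half_pos hε))
  refine ⟨K, fun k hk => ?_⟩
  obtain ⟨c', hc', hzero, hfeas, hle⟩ := hK k hk
  have hsub : {y | ∃ c : ℕ → ℝ, ∃ b : ℕ, memC β c b ∧ (∀ i, k < i → c i = 0) ∧ kFeasC β k c ∧
      y = supP β b c} ⊆ {y | ∃ c b, memC β c b ∧ y = supP β b c} := by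
    rintro _ ⟨c, b, hc, -, -, rfl⟩
    exact ⟨c, b, hc, rfl⟩
  refine ⟨⟨c', b, hc', hzero, hfeas⟩,
    csInf_le_csInf (bddBelow_supP β) ⟨_, c', b, hc', hzero, hfeas, rfl⟩ hsub,
    (csInf_le ((bddBelow_supP β).mono hsub) ⟨c', b, hc', hzero, hfeas, rfl⟩).trans ?_⟩
  linarith

/-- The minimum of `sup_{α ∈ A(c,b)} P(c,α)` over `k`-feasible `(c,b) ∈ C^{≤k}(β)`
converges to `G(β)` as `k → ∞`. -/
theorem lim_min_kfeasible (β : ℝ) (hβ : β ∈ Set.Ico (1 : ℝ) 2) :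
    ∀ ε > (0 : ℝ), ∃ K : ℕ, ∀ k : ℕ, K ≤ k →
      (∃ c : ℕ → ℝ, ∃ b : ℕ, memC β c b ∧ (∀ i, k < i → c i = 0) ∧ kFeasC β k c) ∧
      Gfun β ≤ sInf {y | ∃ c : ℕ → ℝ, ∃ b : ℕ, memC β c b ∧ (∀ i, k < i → c i = 0) ∧ kFeasC β k c ∧ y = supP β b c} ∧
      sInf {y | ∃ c : ℕ → ℝ, ∃ b : ℕ, memC β c b ∧ (∀ i, k < i → c i = 0) ∧ kFeasC β k c ∧ y = supP β b c} ≤ Gfun β + ε :=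
  lim_min_kfeasible_general (one_pos.trans_le hβ.1)
end

section
/- Fix an integer d ≥ 2 and a real β with 1/(d²+1) ≤ β ≤ 1/d. For every ε > 0 there exists A ∈ ℕ such that for every a ≥ A, setting n = ⌊d^a/(d·β)⌋, there exists a non-constant d-adic distribution μ on X_n with ρ(Div(μ)) ≤ 2^{(f_d(β)+ε)·n}. -/
/-- A `d`-adic distribution on `X_n`: nonnegative, sums to 1, each value `0` or `d^{-ℓ}`, `ℓ ≥ 1`. -/
def IsDadicDist (d n : ℕ) (μ : Fin n → ℝ) : Prop :=
  (∀ i, 0 ≤ μ i) ∧ (∑ i, μ i) = 1 ∧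
  ∀ i, μ i = 0 ∨ ∃ ℓ : ℕ, 1 ≤ ℓ ∧ μ i = ((d : ℝ) ^ ℓ)⁻¹

/-- An ordered partition of `X_n` into `d` pairwise disjoint sets covering `X_n`. -/
def IsOrderedPartition (d n : ℕ) (S : Fin d → Finset (Fin n)) : Prop :=
  (∀ j j', j ≠ j' → Disjoint (S j) (S j')) ∧
  (Finset.univ.biUnion S = Finset.univ)

/-- `S ∈ Div(μ)`: an ordered partition each of whose parts has `μ`-measure `1/d`. -/
def MemDiv (d n : ℕ) (μ : Fin n → ℝ) (S : Fin d → Finset (Fin n)) : Prop :=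
  IsOrderedPartition d n S ∧ ∀ j, (∑ x ∈ S j, μ x) = 1 / (d : ℝ)

/-- A `d`-adic hitter: a collection of ordered partitions meeting `Div(μ)` for
every non-constant `d`-adic distribution `μ` on `X_n`. -/
def IsHitter (d n : ℕ) (Q : Finset (Fin d → Finset (Fin n))) : Prop :=
  (∀ S ∈ Q, IsOrderedPartition d n S) ∧
  ∀ μ : Fin n → ℝ, IsDadicDist d n μ → (∃ i j, μ i ≠ μ j) → ∃ S ∈ Q, MemDiv d n μ S

/-- `q^{(d)}(n)`: minimum cardinality of a `d`-adic hitter on `X_n`. -/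
noncomputable def qd (d n : ℕ) : ℕ :=
  sInf {m | ∃ Q : Finset (Fin d → Finset (Fin n)), IsHitter d n Q ∧ Q.card = m}

/-- `ρ_k(Div(μ))` for a type `k : Fin d → ℕ`. -/
noncomputable def rhoType (d n : ℕ) (μ : Fin n → ℝ) (k : Fin d → ℕ) : ℝ :=
  (({S : Fin d → Finset (Fin n) | MemDiv d n μ S ∧ ∀ j, (S j).card = k j}.ncard : ℝ)) /
    (Nat.multinomial Finset.univ k : ℝ)

/-- `ρ(Div(μ)) = max over types k of ρ_k(Div(μ))`. -/
noncomputable def rhoDiv (d n : ℕ) (μ : Fin n → ℝ) : ℝ :=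
  sSup {r | ∃ k : Fin d → ℕ, (∑ j, k j) = n ∧ r = rhoType d n μ k}

/-- `ρ^{(d)}_min(n)`: minimum of `ρ(Div(μ))` over non-constant `d`-adic `μ` on `X_n`. -/
noncomputable def rhoMinD (d n : ℕ) : ℝ :=
  sInf {r | ∃ μ : Fin n → ℝ, IsDadicDist d n μ ∧ (∃ i j, μ i ≠ μ j) ∧ r = rhoDiv d n μ}

/-- `f_d(β) = dβ log₂ d − ((1−(d−1)β) log₂(1/(1−(d−1)β)) + (d−1)β log₂(1/β))`. -/
noncomputable def fdFun (d : ℕ) (β : ℝ) : ℝ :=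
  (d : ℝ) * β * Real.logb 2 d -
    ((1 - ((d : ℝ) - 1) * β) * Real.logb 2 (1 / (1 - ((d : ℝ) - 1) * β)) +
      ((d : ℝ) - 1) * β * Real.logb 2 (1 / β))

/-!
Give mass `d ^ (-a)` to `d ^ a - 1` points and spread the remaining `d ^ (-a)` over a tail of about
`n - d ^ a` points. A set of mass `1 / d = d ^ (a - 1) * d ^ (-a)` contains all of the tail or none
of it. So the tail acts as a single point, whence `|Div(μ)| ≤ d ^ (d ^ a + O(1))`, and in every
member of `Div(μ)` all parts but one have `d ^ (a - 1) + O(1) ≈ β * n` elements. By Stirling the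
number of partitions of such a type is at least `2 ^ (n * H - o(n))`, where `H` is the entropy of
`(1 - (d - 1) * β, β, …, β)`, and `d ^ a ≈ d * β * n`.

For `β = 1 / d` one has `n = d ^ a`, which leaves a tail of one point only and makes `μ` constant,
but then `f_d(β) = 0` and `ρ ≤ 1` suffices, whatever `μ` is.
-/

open Finset Filter Real
open scoped Nat Topology

section Counting

variable {α ι : Type*} [Fintype α] [Fintype ι]

theorem ncard_setOf_card_fiber_eq_le_multinomial [DecidableEq ι] (k : ι → ℕ) :
    {c : α → ι | ∀ j, #{i | c i = j} = k j}.ncard ≤ Nat.multinomial univ k := by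
  obtain hempty | ⟨c, hc⟩ := Set.eq_empty_or_nonempty {c : α → ι | ∀ j, #{i | c i = j} = k j}
  · simp [hempty]
  have horbit : {c : α → ι | ∀ j, #{i | c i = j} = k j} ⊆
      MulAction.orbit (Equiv.Perm α)ᵈᵐᵃ c := by
    intro c' hc'
    have hfiber (j : ι) : Nonempty ({i // c' i = j} ≃ {i // c i = j}) := by
      rw [← Fintype.card_eq, Fintype.card_subtype, Fintype.card_subtype, hc j, hc' j]
    refine ⟨DomMulAct.mk (Equiv.ofFiberEquiv fun j => (hfiber j).some), funext fun i => ?_⟩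
    exact Equiv.ofFiberEquiv_map _ i
  have hstab : Nat.card (MulAction.stabilizer (Equiv.Perm α)ᵈᵐᵃ c) = ∏ j, (k j)! := by
    rw [Nat.card_congr (MulOpposite.opEquiv.trans (DomMulAct.stabilizerMulEquiv c).toEquiv),
      Nat.card_pi]
    refine prod_congr rfl fun j _ => ?_
    rw [Nat.card_perm, Nat.card_eq_fintype_card, Fintype.card_subtype, hc j]
  have hsum : ∑ j, k j = Fintype.card α := by
    rw [← card_univ, card_eq_sum_card_fiberwise (f := c) fun i _ => mem_univ (c i)]
    exact sum_congr rfl fun j _ => (hc j).symm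
  have horbit_card : (MulAction.orbit (Equiv.Perm α)ᵈᵐᵃ c).ncard * ∏ j, (k j)! =
      (∑ j, k j)! := by
    rw [← hstab, ← Nat.card_coe_set_eq, ← Nat.card_prod,
      Nat.card_congr (MulAction.orbitProdStabilizerEquivGroup _ c),
      Nat.card_congr DomMulAct.mk.symm, Nat.card_perm, Nat.card_eq_fintype_card, hsum]
  calc _ ≤ (MulAction.orbit (Equiv.Perm α)ᵈᵐᵃ c).ncard := Set.ncard_le_ncard horbit
    _ = Nat.multinomial univ k := Nat.eq_div_of_mul_eq_left
      (prod_ne_zero_iff.2 fun j _ => Nat.factorial_ne_zero _) horbit_card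

theorem ncard_setOf_constOn_le [DecidableEq α] [Nonempty ι] (T : Finset α) (x : α) :
    {c : α → ι | ∀ i ∈ T, c i = c x}.ncard ≤ Fintype.card ι ^ (#Tᶜ + 1) := by
  have hinj : Set.InjOn (fun c (i : (insert x Tᶜ : Finset α)) => c i)
      {c : α → ι | ∀ i ∈ T, c i = c x} := by
    intro c hc c' hc' hcc'
    have heq : ∀ i ∈ insert x Tᶜ, c i = c' i := fun i hi => congrFun hcc' ⟨i, hi⟩
    funext i
    by_cases hi : i ∈ T
    · rw [hc i hi, hc' i hi, heq x (mem_insert_self _ _)]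
    · exact heq i (mem_insert_of_mem (mem_compl.2 hi))
  calc {c : α → ι | ∀ i ∈ T, c i = c x}.ncard
      ≤ (Set.univ : Set ((insert x Tᶜ : Finset α) → ι)).ncard :=
        Set.ncard_le_ncard_of_injOn _ (fun _ _ => Set.mem_univ _) hinj
    _ = Fintype.card ι ^ #(insert x Tᶜ) := by
        rw [Set.ncard_univ, Nat.card_eq_fintype_card, Fintype.card_fun, Fintype.card_coe]
    _ ≤ Fintype.card ι ^ (#Tᶜ + 1) :=
        Nat.pow_le_pow_right Fintype.card_pos (card_insert_le _ _)

end Counting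

section Entropy

theorem log_factorial_le_stirling (n : ℕ) :
    log n ! ≤ n * log n - n + log n / 2 + 1 := by
  obtain - | m := n
  · simp
  have hanti := Stirling.log_stirlingSeq'_antitone (Nat.zero_le m)
  simp only [Function.comp_apply, Stirling.log_stirlingSeq_formula] at hanti
  have hm : ((m : ℝ) + 1) ≠ 0 := by positivity
  simp only [Nat.succ_eq_add_one, Nat.cast_add, Nat.cast_one, zero_add, Nat.factorial_one,
    log_one, mul_one, one_mul, log_div hm (exp_ne_zero 1), log_mul two_ne_zero hm, log_exp,
    one_div, log_inv] at hanti
  push_cast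
  linarith

theorem mul_negMulLog_div (x : ℝ) {y : ℝ} (hy : y ≠ 0) :
    y * negMulLog (x / y) = x * log y - x * log x := by
  obtain rfl | hx := eq_or_ne x 0
  · simp
  · rw [negMulLog, log_div hx hy]
    field_simp
    ring

theorem mul_sum_negMulLog_sub_le_log_multinomial {ι : Type*} {s : Finset ι} {k : ι → ℕ} {n : ℕ}
    (hk : ∑ j ∈ s, k j = n) :
    n * ∑ j ∈ s, negMulLog (k j / n) - #s * (log n / 2 + 1) ≤ log (Nat.multinomial s k) := by
  obtain rfl | hn := eq_or_ne n 0
  · have := log_natCast_nonneg (Nat.multinomial s k)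
    simp only [CharP.cast_eq_zero, zero_mul, log_zero, zero_div, zero_add, mul_one]
    linarith [(#s).cast_nonneg (α := ℝ)]
  have hn' : (n : ℝ) ≠ 0 := Nat.cast_ne_zero.2 hn
  have hk' : ∑ j ∈ s, (k j : ℝ) = n := by exact_mod_cast hk
  have hlog : ∑ j ∈ s, log (k j)! + log (Nat.multinomial s k) = log n ! := by
    rw [← log_prod fun j _ => by positivity, ← log_mul (by positivity)
      (by exact_mod_cast (Nat.multinomial_pos s k).ne'), ← hk, ← Nat.multinomial_spec s k]
    push_cast
    rfl
  have hstirling : n * log n - n ≤ log n ! := by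
    have := Stirling.le_log_factorial_stirling hn
    have := log_natCast_nonneg n
    have := log_nonneg (x := 2 * π) (by linarith [pi_gt_three])
    linarith
  have hfactorial (j : ι) (hj : j ∈ s) :
      log (k j)! ≤ k j * log (k j) - k j + (log n / 2 + 1) := by
    have hle : log (k j) ≤ log n := by
      obtain h0 | hpos := (k j).eq_zero_or_pos
      · simpa [h0] using log_natCast_nonneg n
      · have hkn : k j ≤ n := hk ▸ single_le_sum_of_canonicallyOrdered hj
        gcongr
    linarith [log_factorial_le_stirling (k j)]
  calc n * ∑ j ∈ s, negMulLog (k j / n) - #s * (log n / 2 + 1)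
      = n * log n - n - ∑ j ∈ s, (k j * log (k j) - k j + (log n / 2 + 1)) := by
        simp only [mul_sum, mul_negMulLog_div _ hn', sum_add_distrib, sum_sub_distrib,
          ← sum_mul, hk', sum_const, nsmul_eq_mul]
        ring
    _ ≤ log n ! - ∑ j ∈ s, log (k j)! := sub_le_sub hstirling (sum_le_sum hfactorial)
    _ = log (Nat.multinomial s k) := by rw [← hlog, add_sub_cancel_left]

/-- The entropy, in nats, of a probability vector of length `d` whose entries are all `β` except
for a single one, which is then `1 - (d - 1) * β`. -/
noncomputable def spikeEntropy (d : ℕ) (β : ℝ) : ℝ :=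
  negMulLog (1 - (d - 1) * β) + (d - 1) * negMulLog β

theorem fdFun_mul_log_two (d : ℕ) (β : ℝ) :
    fdFun d β * log 2 = d * β * log d - spikeEntropy d β := by
  have hlog2 : log 2 ≠ 0 := (log_pos one_lt_two).ne'
  simp only [fdFun, spikeEntropy, logb, negMulLog, one_div, log_inv]
  field_simp

theorem fdFun_one_div (d : ℕ) [NeZero d] : fdFun d (1 / d) = 0 := by
  have hd : (d : ℝ) ≠ 0 := NeZero.ne _
  have hlast : 1 - ((d : ℝ) - 1) * (1 / d) = 1 / d := by field_simp; ring
  rw [fdFun, hlast, one_div_one_div]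
  field_simp
  ring

theorem exists_pos_forall_spikeEntropy_sub_lt_sum_negMulLog {ι : Type*} [Fintype ι] (β : ℝ)
    {η : ℝ} (hη : 0 < η) :
    ∃ δ > 0, ∀ (p : ι → ℝ) (j₀ : ι), ∑ j, p j = 1 → (∀ j ≠ j₀, |p j - β| < δ) →
      spikeEntropy (Fintype.card ι) β - η < ∑ j, negMulLog (p j) := by
  classical
  let g (j₀ : ι) (p : ι → ℝ) : ℝ :=
    negMulLog (1 - ∑ j ∈ univ.erase j₀, p j) + ∑ j ∈ univ.erase j₀, negMulLog (p j)
  have hcont (j₀ : ι) : Continuous (g j₀) := by fun_prop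
  have hg (j₀ : ι) : g j₀ (fun _ => β) = spikeEntropy (Fintype.card ι) β := by
    simp only [g, spikeEntropy, sum_const, nsmul_eq_mul,
      cast_card_erase_of_mem (mem_univ j₀), card_univ]
  have hnear : ∀ᶠ p in 𝓝 (fun _ : ι => β), ∀ j₀, g j₀ (fun _ => β) - η < g j₀ p :=
    eventually_all.2 fun j₀ =>
      (hcont j₀).continuousAt.eventually_const_lt (sub_lt_self _ hη)
  obtain ⟨δ, hδ, hball⟩ := Metric.eventually_nhds_iff.1 hnear
  refine ⟨δ, hδ, fun p j₀ hp hclose => ?_⟩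
  have hdist : dist (Function.update p j₀ β) (fun _ => β) < δ := by
    refine (dist_pi_lt_iff hδ).2 fun j => ?_
    obtain rfl | hj := eq_or_ne j j₀
    · simpa using hδ
    · simpa [hj, Real.dist_eq] using hclose j hj
  have hupdate (f : ℝ → ℝ) : ∑ j ∈ univ.erase j₀, f (Function.update p j₀ β j) =
      ∑ j ∈ univ.erase j₀, f (p j) :=
    sum_congr rfl fun j hj => by rw [Function.update_of_ne (ne_of_mem_erase hj)]
  have hj₀ : 1 - ∑ j ∈ univ.erase j₀, p j = p j₀ := by
    rw [← hp, ← add_sum_erase _ _ (mem_univ j₀), add_sub_cancel_right]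
  calc _ < g j₀ (Function.update p j₀ β) := hg j₀ ▸ hball hdist j₀
    _ = negMulLog (p j₀) + ∑ j ∈ univ.erase j₀, negMulLog (p j) := by
      rw [← hj₀, ← hupdate negMulLog, ← hupdate fun x => x]
    _ = ∑ j, negMulLog (p j) :=
      add_sum_erase _ (fun j => negMulLog (p j)) (mem_univ j₀)

end Entropy

section Partition

variable {d n : ℕ}

/-- The ordered partition of `X_n` into the colour classes of `c`; every ordered partition is of
this form, so that counting partitions amounts to counting colourings. -/
def fibers (c : Fin n → Fin d) (j : Fin d) : Finset (Fin n) := {i | c i = j}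

theorem mem_fibers {c : Fin n → Fin d} {i : Fin n} {j : Fin d} : i ∈ fibers c j ↔ c i = j := by
  simp [fibers]

theorem IsOrderedPartition.exists_mem {S : Fin d → Finset (Fin n)}
    (hS : IsOrderedPartition d n S) (i : Fin n) : ∃ j, i ∈ S j := by
  simpa using hS.2.ge (mem_univ i)

theorem IsOrderedPartition.exists_fibers_eq {S : Fin d → Finset (Fin n)}
    (hS : IsOrderedPartition d n S) : ∃ c, fibers c = S := by
  choose c hc using hS.exists_mem
  refine ⟨c, funext fun j => ext fun i => mem_fibers.trans ⟨fun h => h ▸ hc i, fun hi => ?_⟩⟩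
  by_contra hne
  exact disjoint_left.1 (hS.1 _ _ hne) (hc i) hi

theorem IsOrderedPartition.sum_card {S : Fin d → Finset (Fin n)}
    (hS : IsOrderedPartition d n S) : ∑ j, #(S j) = n := by
  rw [← card_biUnion fun j _ j' _ hne => hS.1 j j' hne, hS.2, card_univ, Fintype.card_fin]

end Partition

section Rho

variable {d n : ℕ}

theorem rhoType_le_one (μ : Fin n → ℝ) (k : Fin d → ℕ) : rhoType d n μ k ≤ 1 := by
  have hsub : {S | MemDiv d n μ S ∧ ∀ j, #(S j) = k j} ⊆
      fibers '' {c | ∀ j, #{i | c i = j} = k j} := by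
    rintro S ⟨hS, hk⟩
    obtain ⟨c, rfl⟩ := hS.1.exists_fibers_eq
    exact ⟨c, hk, rfl⟩
  refine div_le_one_of_le₀ (Nat.cast_le.2 ?_) (Nat.cast_nonneg _)
  exact (Set.ncard_le_ncard hsub).trans <| (Set.ncard_image_le).trans <|
    ncard_setOf_card_fiber_eq_le_multinomial k

theorem rhoType_le_div_multinomial (μ : Fin n → ℝ) (k : Fin d → ℕ) :
    rhoType d n μ k ≤ {S | MemDiv d n μ S}.ncard / Nat.multinomial univ k := by
  unfold rhoType
  gcongr
  · exact Set.toFinite _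
  · exact fun hS => hS.1

theorem rhoType_le_exp [NeZero d] {μ : Fin n → ℝ} {k : Fin d → ℕ} {M : ℕ} (hk : ∑ j, k j = n)
    (hM : {S | MemDiv d n μ S}.ncard ≤ d ^ M) :
    rhoType d n μ k ≤
      exp (M * log d + d * (log n / 2 + 1) - n * ∑ j, negMulLog (k j / n)) := by
  have hd : (0 : ℝ) < d := Nat.cast_pos.2 (NeZero.pos d)
  have hmulti : (0 : ℝ) < Nat.multinomial univ k := Nat.cast_pos.2 (Nat.multinomial_pos _ _)
  have hentropy := mul_sum_negMulLog_sub_le_log_multinomial hk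
  rw [card_univ, Fintype.card_fin, le_log_iff_exp_le hmulti] at hentropy
  calc rhoType d n μ k
      ≤ {S | MemDiv d n μ S}.ncard / Nat.multinomial univ k := rhoType_le_div_multinomial μ k
    _ ≤ d ^ M / exp (n * ∑ j, negMulLog (k j / n) - d * (log n / 2 + 1)) := by
        gcongr
        exact_mod_cast hM
    _ = exp (M * log d + d * (log n / 2 + 1) - n * ∑ j, negMulLog (k j / n)) := by
        nth_rw 1 [← exp_log hd]
        rw [← exp_nat_mul, ← exp_sub, sub_sub_eq_add_sub]

theorem rhoDiv_le {μ : Fin n → ℝ} {B : ℝ} (hB : 0 ≤ B)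
    (h : ∀ S, MemDiv d n μ S → rhoType d n μ (fun j => #(S j)) ≤ B) : rhoDiv d n μ ≤ B := by
  refine Real.sSup_le ?_ hB
  rintro _ ⟨k, -, rfl⟩
  obtain hempty | ⟨S, hS, hk⟩ :=
    Set.eq_empty_or_nonempty {S | MemDiv d n μ S ∧ ∀ j, #(S j) = k j}
  · simpa [rhoType, hempty] using hB
  · obtain rfl := funext hk
    exact h S hS

theorem rhoDiv_le_one (μ : Fin n → ℝ) : rhoDiv d n μ ≤ 1 :=
  rhoDiv_le zero_le_one fun _ _ => rhoType_le_one μ _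

end Rho

section Tail

variable {α : Type*} {w : ℝ} {μ : α → ℝ} {T s : Finset α} {N : ℕ}

/-- `T` is a tail of `μ` of unit mass `w`: its elements have positive masses with total `w`, and
every element off `T` has mass `w` or `0`. A part of mass `N * w` then contains all of `T` or
none of it, which is why `T` behaves like a single element. -/
structure HasTail (w : ℝ) (μ : α → ℝ) (T : Finset α) : Prop where
  nonempty : T.Nonempty
  pos : ∀ i ∈ T, 0 < μ i
  sum_eq : ∑ i ∈ T, μ i = w
  eq_or_eq_zero : ∀ i ∉ T, μ i = w ∨ μ i = 0

namespace HasTail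

theorem unit_pos (h : HasTail w μ T) : 0 < w :=
  h.sum_eq ▸ sum_pos h.pos h.nonempty

theorem sum_of_disjoint (h : HasTail w μ T) (hs : Disjoint s T) :
    ∑ i ∈ s, μ i = #{i ∈ s | μ i ≠ 0} * w := by
  rw [← sum_filter_ne_zero, ← nsmul_eq_mul]
  refine sum_eq_card_nsmul fun i hi => ?_
  obtain ⟨his, hi0⟩ := mem_filter.1 hi
  exact (h.eq_or_eq_zero i (disjoint_left.1 hs his)).resolve_right hi0

theorem card_filter_ne_zero (h : HasTail w μ T) (hs : Disjoint s T) (hsum : ∑ i ∈ s, μ i = N * w) :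
    #{i ∈ s | μ i ≠ 0} = N := by
  rw [h.sum_of_disjoint hs] at hsum
  exact_mod_cast mul_right_cancel₀ h.unit_pos.ne' hsum

theorem le_card (h : HasTail w μ T) (hs : Disjoint s T) (hsum : ∑ i ∈ s, μ i = N * w) :
    N ≤ #s :=
  h.card_filter_ne_zero hs hsum ▸ card_filter_le _ _

theorem card_le [Fintype α] (h : HasTail w μ T) (hs : Disjoint s T)
    (hsum : ∑ i ∈ s, μ i = N * w) : #s ≤ N + #{i | μ i = 0} := by
  rw [← card_filter_add_card_filter_not (s := s) (μ · ≠ 0), h.card_filter_ne_zero hs hsum]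
  gcongr
  simp [subset_iff]

theorem lt_of_mem (h : HasTail w μ T) (hT : 1 < #T) {x : α} (hx : x ∈ T) : μ x < w := by
  obtain ⟨y, hy, hyx⟩ := exists_mem_ne hT x
  exact (single_lt_sum hyx hx hy (h.pos y hy) fun i hi _ => (h.pos i hi).le).trans_eq h.sum_eq

theorem sum_univ [Fintype α] [DecidableEq α] (h : HasTail w μ T) :
    ∑ i, μ i = (#{i ∈ Tᶜ | μ i ≠ 0} + 1) * w := by
  rw [← sum_compl_add_sum T, h.sum_of_disjoint disjoint_compl_left, h.sum_eq, add_one_mul]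

theorem card_null_add_card [Fintype α] [DecidableEq α] (h : HasTail w μ T) :
    #{i | μ i = 0} + #{i ∈ Tᶜ | μ i ≠ 0} = #Tᶜ := by
  rw [← card_filter_add_card_filter_not (s := Tᶜ) (μ · = 0)]
  congr 2
  ext i
  simpa using fun h0 hi => (h.pos i hi).ne' h0

theorem subset_of_mem (h : HasTail w μ T) (hsum : ∑ i ∈ s, μ i = N * w) {x : α} (hxs : x ∈ s)
    (hxT : x ∈ T) : T ⊆ s := by
  classical
  have hw := h.unit_pos
  set M := #{i ∈ s \ T | μ i ≠ 0}
  have hinter : ∑ i ∈ s ∩ T, μ i = (N - M) * w := by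
    rw [sub_mul, ← h.sum_of_disjoint sdiff_disjoint, ← hsum, ← sum_inter_add_sum_sdiff s T]
    ring
  have hpos : 0 < ∑ i ∈ s ∩ T, μ i :=
    sum_pos (fun i hi => h.pos i (mem_inter.1 hi).2) ⟨x, mem_inter.2 ⟨hxs, hxT⟩⟩
  have hlt : M < N := by
    rw [hinter, mul_pos_iff_of_pos_right hw, sub_pos] at hpos
    exact_mod_cast hpos
  have hle : w ≤ ∑ i ∈ s ∩ T, μ i := by
    have : (M : ℝ) + 1 ≤ N := by exact_mod_cast hlt
    rw [hinter]
    exact le_mul_of_one_le_left hw.le (by linarith)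
  by_contra hTs
  obtain ⟨y, hyT, hys⟩ := not_subset.1 hTs
  have hstrict : ∑ i ∈ s ∩ T, μ i < ∑ i ∈ T, μ i :=
    sum_lt_sum_of_subset inter_subset_right hyT (by simp [hys]) (h.pos y hyT)
      fun i hi _ => (h.pos i hi).le
  exact (hstrict.trans_eq h.sum_eq).not_ge hle

variable {d n : ℕ} {μ : Fin n → ℝ} {T : Finset (Fin n)} {S : Fin d → Finset (Fin n)}

theorem exists_subset_part (h : HasTail w μ T) (hN : 1 / (d : ℝ) = N * w)
    (hS : MemDiv d n μ S) : ∃ j₀, T ⊆ S j₀ := by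
  obtain ⟨x, hx⟩ := h.nonempty
  obtain ⟨j₀, hj₀⟩ := hS.1.exists_mem x
  exact ⟨j₀, h.subset_of_mem ((hS.2 j₀).trans hN) hj₀ hx⟩

theorem exists_forall_ne_card_mem_Icc (h : HasTail w μ T) (hN : 1 / (d : ℝ) = N * w)
    (hS : MemDiv d n μ S) : ∃ j₀, ∀ j ≠ j₀, #(S j) ∈ Set.Icc N (N + #{i | μ i = 0}) := by
  obtain ⟨j₀, hj₀⟩ := h.exists_subset_part hN hS
  refine ⟨j₀, fun j hj => ?_⟩
  have hdisj : Disjoint (S j) T := (hS.1.1 j j₀ hj).mono_right hj₀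
  have hsum := (hS.2 j).trans hN
  exact ⟨h.le_card hdisj hsum, h.card_le hdisj hsum⟩

theorem ncard_memDiv_le [NeZero d] (h : HasTail w μ T) (hN : 1 / (d : ℝ) = N * w) :
    {S | MemDiv d n μ S}.ncard ≤ d ^ (#Tᶜ + 1) := by
  obtain ⟨x, hx⟩ := h.nonempty
  have hsub : {S | MemDiv d n μ S} ⊆ fibers '' {c | ∀ i ∈ T, c i = c x} := by
    intro S hS
    obtain ⟨c, rfl⟩ := hS.1.exists_fibers_eq
    obtain ⟨j₀, hj₀⟩ := h.exists_subset_part hN hS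
    exact ⟨c, fun i hi => (mem_fibers.1 (hj₀ hi)).trans (mem_fibers.1 (hj₀ hx)).symm, rfl⟩
  calc _ ≤ _ := Set.ncard_le_ncard hsub
    _ ≤ _ := Set.ncard_image_le
    _ ≤ Fintype.card (Fin d) ^ (#Tᶜ + 1) := ncard_setOf_constOn_le T x
    _ = d ^ (#Tᶜ + 1) := by rw [Fintype.card_fin]

end HasTail

end Tail

section Construction

theorem exists_dadic_weights {α : Type*} {d : ℕ} [NeZero d] (a m : ℕ) {T : Finset α}
    (hT : #T = (d - 1) * m + 1) :
    ∃ τ : α → ℝ, (∀ i ∈ T, ∃ ℓ ≥ a, τ i = ((d : ℝ) ^ ℓ)⁻¹) ∧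
      ∑ i ∈ T, τ i = ((d : ℝ) ^ a)⁻¹ := by
  classical
  induction m generalizing a T with
  | zero =>
    exact ⟨fun _ => ((d : ℝ) ^ a)⁻¹, fun _ _ => ⟨a, le_rfl, rfl⟩, by simp [hT]⟩
  | succ m ih =>
    have hd : (d : ℝ) ≠ 0 := NeZero.ne _
    obtain ⟨T', hT'T, hT'⟩ : ∃ T' ⊆ T, #T' = (d - 1) * m + 1 :=
      exists_subset_card_eq (by rw [hT]; gcongr; omega)
    have hrest : #(T \ T') = d - 1 := by
      rw [card_sdiff_of_subset hT'T, hT, hT', mul_add_one]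
      omega
    obtain ⟨τ, hτ, hsum⟩ := ih (a + 1) hT'
    refine ⟨T'.piecewise τ fun _ => ((d : ℝ) ^ (a + 1))⁻¹, fun i _ => ?_, ?_⟩
    · by_cases hi : i ∈ T'
      · obtain ⟨ℓ, hℓ, hτi⟩ := hτ i hi
        exact ⟨ℓ, by omega, by simp [hi, hτi]⟩
      · exact ⟨a + 1, by omega, by simp [hi]⟩
    · rw [sum_piecewise, inter_eq_right.2 hT'T, hsum, sum_const, hrest, nsmul_eq_mul,
        Nat.cast_pred (NeZero.pos d)]
      field_simp
      ring

variable {d n a : ℕ}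

theorem exists_isDadicDist_hasTail_of_card [NeZero d] {m : ℕ} {H T : Finset (Fin n)} (ha : 1 ≤ a)
    (hHT : Disjoint H T) (hH : #H + 1 = d ^ a) (hT : #T = (d - 1) * m + 1) :
    ∃ μ, IsDadicDist d n μ ∧ HasTail ((d : ℝ) ^ a)⁻¹ μ T := by
  have hd : (0 : ℝ) < d := Nat.cast_pos.2 (NeZero.pos d)
  obtain ⟨τ, hτ, hsum⟩ := exists_dadic_weights a m hT
  set w : ℝ := ((d : ℝ) ^ a)⁻¹ with hw
  have hw0 : w ≠ 0 := by positivity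
  let μ : Fin n → ℝ := T.piecewise τ (H.piecewise (fun _ => w) 0)
  have hμT : ∀ i ∈ T, μ i = τ i := fun i hi => by simp [μ, hi]
  have hμH : ∀ i ∈ H, μ i = w := fun i hi => by simp [μ, disjoint_left.1 hHT hi, hi]
  have hμ0 : ∀ i ∉ T, i ∉ H → μ i = 0 := fun i hiT hiH => by simp [μ, hiT, hiH]
  have hvalue (i : Fin n) : μ i = 0 ∨ ∃ ℓ, 1 ≤ ℓ ∧ μ i = ((d : ℝ) ^ ℓ)⁻¹ := by
    by_cases hiT : i ∈ T
    · obtain ⟨ℓ, hℓ, hτi⟩ := hτ i hiT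
      exact .inr ⟨ℓ, ha.trans hℓ, (hμT i hiT).trans hτi⟩
    · exact (em (i ∈ H)).symm.imp (hμ0 i hiT) fun hiH => ⟨a, ha, hμH i hiH⟩
  have htail : HasTail w μ T :=
    { nonempty := card_pos.1 (by omega)
      pos := fun i hi => by
        obtain ⟨ℓ, -, hτi⟩ := hτ i hi
        rw [hμT i hi, hτi]
        positivity
      sum_eq := by rw [sum_congr rfl hμT, hsum]
      eq_or_eq_zero := fun i hiT => (em (i ∈ H)).imp (hμH i) (hμ0 i hiT) }
  have hsupport : ({i ∈ Tᶜ | μ i ≠ 0} : Finset (Fin n)) = H := by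
    ext i
    simp only [mem_filter, mem_compl]
    exact ⟨fun hi => by_contra fun hiH => hi.2 (hμ0 i hi.1 hiH),
      fun hiH => ⟨disjoint_left.1 hHT hiH, hμH i hiH ▸ hw0⟩⟩
  have htotal : ∑ i, μ i = 1 := by
    have hH' : (#H : ℝ) + 1 = (d : ℝ) ^ a := by exact_mod_cast hH
    rw [htail.sum_univ, hsupport, hH', hw, mul_inv_cancel₀ (by positivity)]
  refine ⟨μ, ⟨fun i => ?_, htotal, hvalue⟩, htail⟩
  obtain h0 | ⟨ℓ, -, hℓ⟩ := hvalue i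
  · exact h0.ge
  · exact hℓ ▸ by positivity

theorem HasTail.card_ne_zero_add_one [NeZero d] {μ : Fin n → ℝ} {T : Finset (Fin n)}
    (h : HasTail ((d : ℝ) ^ a)⁻¹ μ T) (hμ : IsDadicDist d n μ) :
    #{i ∈ Tᶜ | μ i ≠ 0} + 1 = d ^ a := by
  have hd : (d : ℝ) ≠ 0 := NeZero.ne _
  have hsum := h.sum_univ
  rw [hμ.2.1, ← div_eq_mul_inv, eq_div_iff (by positivity), one_mul] at hsum
  exact_mod_cast hsum.symm

theorem exists_isDadicDist_hasTail (hd : 2 ≤ d) (ha : 1 ≤ a) (hn : d ^ a + d ≤ n) :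
    ∃ μ T, IsDadicDist d n μ ∧ (∃ i j, μ i ≠ μ j) ∧ HasTail ((d : ℝ) ^ a)⁻¹ μ T ∧
      #Tᶜ < d ^ a + d ∧ #{i | μ i = 0} ≤ d := by
  have : NeZero d := ⟨by omega⟩
  have hda : d ≤ d ^ a := Nat.le_self_pow (by omega) d
  set m := (n - d ^ a) / (d - 1)
  have hm_le : (d - 1) * m ≤ n - d ^ a := Nat.mul_div_le _ _
  have hlt_m : n - d ^ a < (d - 1) * m + (d - 1) := by
    rw [← mul_add_one]
    exact Nat.lt_mul_div_succ _ (by omega)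
  have hm_pos : 0 < (d - 1) * m :=
    Nat.mul_pos (by omega) (Nat.div_pos (by omega) (by omega))
  obtain ⟨T, -, hT⟩ : ∃ T ⊆ (univ : Finset (Fin n)), #T = (d - 1) * m + 1 :=
    exists_subset_card_eq (by rw [card_univ, Fintype.card_fin]; omega)
  have hcompl : #Tᶜ = n - #T := by rw [card_compl, Fintype.card_fin]
  obtain ⟨H, hHT, hH⟩ : ∃ H ⊆ Tᶜ, #H = d ^ a - 1 := exists_subset_card_eq (by omega)
  obtain ⟨μ, hμ, htail⟩ := exists_isDadicDist_hasTail_of_card ha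
    (disjoint_left.2 fun i hi => mem_compl.1 (hHT hi)) (by omega) hT
  have hheavy := htail.card_ne_zero_add_one hμ
  have hnull := htail.card_null_add_card
  refine ⟨μ, T, hμ, ?_, htail, by omega, by omega⟩
  obtain ⟨x, hx⟩ := htail.nonempty
  obtain ⟨i, hi⟩ : ({i ∈ Tᶜ | μ i ≠ 0} : Finset (Fin n)).Nonempty := card_pos.1 (by omega)
  obtain ⟨hiT, hi0⟩ := mem_filter.1 hi
  have hiw := (htail.eq_or_eq_zero i (mem_compl.1 hiT)).resolve_right hi0
  exact ⟨x, i, hiw ▸ (htail.lt_of_mem (by omega) hx).ne⟩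

theorem exists_isDadicDist_memDiv_bounds (hd : 2 ≤ d) (ha : 1 ≤ a) (hn : d ^ a + d ≤ n) :
    ∃ μ, IsDadicDist d n μ ∧ (∃ i j, μ i ≠ μ j) ∧ {S | MemDiv d n μ S}.ncard ≤ d ^ (d ^ a + d) ∧
      ∀ S, MemDiv d n μ S →
        ∃ j₀, ∀ j ≠ j₀, #(S j) ∈ Set.Icc (d ^ (a - 1)) (d ^ (a - 1) + d) := by
  have : NeZero d := ⟨by omega⟩
  have hN : 1 / (d : ℝ) = (d ^ (a - 1) : ℕ) * ((d : ℝ) ^ a)⁻¹ := by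
    rw [← pow_sub_one_mul (by omega : a ≠ 0) (d : ℝ)]
    push_cast
    field_simp
  obtain ⟨μ, T, hμ, hne, htail, hT, hnull⟩ := exists_isDadicDist_hasTail hd ha hn
  refine ⟨μ, hμ, hne, (htail.ncard_memDiv_le hN).trans (Nat.pow_le_pow_right (by omega) hT),
    fun S hS => ?_⟩
  obtain ⟨j₀, hj₀⟩ := htail.exists_forall_ne_card_mem_Icc hN hS
  exact ⟨j₀, fun j hj => Set.Icc_subset_Icc_right (by gcongr) (hj₀ j hj)⟩

theorem exists_isDadicDist_ne [NeZero d] (hn : d < n) :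
    ∃ μ, IsDadicDist d n μ ∧ ∃ i j, μ i ≠ μ j := by
  have hd : (0 : ℝ) < d := Nat.cast_pos.2 (NeZero.pos d)
  refine ⟨fun i => if i.val < d then (d : ℝ)⁻¹ else 0, ⟨fun i => ?_, ?_, fun i => ?_⟩,
    ⟨0, (NeZero.pos d).trans hn⟩, ⟨d, hn⟩, ?_⟩
  · positivity
  · have hcard : #{i : Fin n | i.val < d} = d := by
      rw [Fin.card_filter_val_lt, min_eq_right hn.le]
    rw [← sum_filter, sum_const, hcard, nsmul_eq_mul, mul_inv_cancel₀ hd.ne']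
  · by_cases hi : i.val < d
    · exact .inr ⟨1, le_rfl, by simp only [if_pos hi, pow_one]⟩
    · exact .inl (if_neg hi)
  · simp [NeZero.pos d, hd.ne']

end Construction

section Asymptotics

theorem tendsto_add_const_div_of_tendsto_div {ι : Type*} {l : Filter ι} {f g : ι → ℝ} {x : ℝ}
    (hfg : Tendsto (fun i => f i / g i) l (𝓝 x)) (hg : Tendsto g l atTop) (c : ℝ) :
    Tendsto (fun i => (f i + c) / g i) l (𝓝 x) := by
  simpa [add_div] using hfg.add (hg.const_div_atTop c)

theorem tendsto_pow_div_floor {b c : ℝ} (hb : 1 < b) (hc : 0 < c) :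
    Tendsto (fun a : ℕ => b ^ a / ⌊b ^ a / c⌋₊) atTop (𝓝 c) := by
  have hpow : Tendsto (fun a : ℕ => b ^ a / c) atTop atTop :=
    (tendsto_pow_atTop_atTop_of_one_lt hb).atTop_div_const hc
  have := ((tendsto_nat_floor_div_atTop (R := ℝ)).comp hpow).inv₀ one_ne_zero
  have := this.const_mul c
  rw [inv_one, mul_one] at this
  refine this.congr fun a => ?_
  simp only [Function.comp_apply, inv_div]
  field_simp

theorem tendsto_floor_pow_div_atTop {b c : ℝ} (hb : 1 < b) (hc : 0 < c) :
    Tendsto (fun a : ℕ => ⌊b ^ a / c⌋₊) atTop atTop :=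
  tendsto_nat_floor_atTop.comp ((tendsto_pow_atTop_atTop_of_one_lt hb).atTop_div_const hc)

variable {d : ℕ} {β : ℝ} {N : ℕ → ℕ}

theorem tendsto_pow_add_mul_log_div (hN : Tendsto N atTop atTop)
    (hratio : Tendsto (fun a => (d : ℝ) ^ a / N a) atTop (𝓝 (d * β))) :
    Tendsto (fun a => ((d ^ a + d) * log d + d * (log (N a) / 2 + 1)) / N a) atTop
      (𝓝 (d * β * log d)) := by
  have hNreal : Tendsto (fun a => (N a : ℝ)) atTop atTop := tendsto_natCast_atTop_atTop.comp hN
  have hlog : Tendsto (fun a => log (N a) / N a) atTop (𝓝 0) :=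
    isLittleO_log_id_atTop.tendsto_div_nhds_zero.comp hNreal
  have hmain := (tendsto_add_const_div_of_tendsto_div hratio hNreal d).mul_const (log d)
  have herror : Tendsto (fun a => (d / 2 * (log (N a) / N a) + d / N a)) atTop (𝓝 0) := by
    simpa using (hlog.const_mul (d / 2 : ℝ)).add (hNreal.const_div_atTop (d : ℝ))
  rw [← add_zero (d * β * log d)]
  refine (hmain.add herror).congr fun a => ?_
  ring

theorem eventually_forall_mem_Icc_abs_div_sub_lt (hN : Tendsto N atTop atTop)
    (hratio : Tendsto (fun a => (d : ℝ) ^ a / N a) atTop (𝓝 (d * β))) (hd : d ≠ 0) {δ : ℝ}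
    (hδ : 0 < δ) :
    ∀ᶠ a in atTop, ∀ k ∈ Set.Icc (d ^ (a - 1)) (d ^ (a - 1) + d), |(k : ℝ) / N a - β| < δ := by
  have hd' : (d : ℝ) ≠ 0 := Nat.cast_ne_zero.2 hd
  have hNreal : Tendsto (fun a => (N a : ℝ)) atTop atTop := tendsto_natCast_atTop_atTop.comp hN
  have hlower : Tendsto (fun a => (d : ℝ) ^ (a - 1) / N a) atTop (𝓝 β) := by
    have hdiv := hratio.div_const (d : ℝ)
    rw [mul_div_cancel_left₀ _ hd'] at hdiv
    refine hdiv.congr' ?_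
    filter_upwards [eventually_ge_atTop 1] with a ha
    rw [← pow_sub_one_mul (by omega : a ≠ 0) (d : ℝ), div_right_comm, mul_div_cancel_right₀ _ hd']
  have hupper := tendsto_add_const_div_of_tendsto_div hlower hNreal d
  filter_upwards [hlower.eventually_const_lt (sub_lt_self β hδ),
    hupper.eventually_lt_const (lt_add_of_pos_right β hδ)] with a hlo hup k ⟨hk, hk'⟩
  have hk_lo : (d : ℝ) ^ (a - 1) / N a ≤ k / N a := by gcongr; exact_mod_cast hk
  have hk_up : k / N a ≤ ((d : ℝ) ^ (a - 1) + d) / N a := by gcongr; exact_mod_cast hk'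
  exact abs_sub_lt_iff.2 ⟨by linarith, by linarith⟩

theorem eventually_add_le_of_tendsto_pow_div (hβ : d * β < 1) (hN : Tendsto N atTop atTop)
    (hratio : Tendsto (fun a => (d : ℝ) ^ a / N a) atTop (𝓝 (d * β))) :
    ∀ᶠ a in atTop, d ^ a + d ≤ N a := by
  have hNreal : Tendsto (fun a => (N a : ℝ)) atTop atTop := tendsto_natCast_atTop_atTop.comp hN
  filter_upwards [hN.eventually_gt_atTop 0,
    (tendsto_add_const_div_of_tendsto_div hratio hNreal d).eventually_lt_const hβ] with a hpos hlt
  rw [div_lt_one (by exact_mod_cast hpos)] at hlt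
  exact_mod_cast hlt.le

theorem eventually_exists_rhoDiv_le (hd : 2 ≤ d) (hβ : d * β < 1) {ε : ℝ} (hε : 0 < ε)
    (hN : Tendsto N atTop atTop)
    (hratio : Tendsto (fun a => (d : ℝ) ^ a / N a) atTop (𝓝 (d * β))) :
    ∀ᶠ a in atTop, ∃ μ, IsDadicDist d (N a) μ ∧ (∃ i j, μ i ≠ μ j) ∧
      rhoDiv d (N a) μ ≤ 2 ^ ((fdFun d β + ε) * N a) := by
  have : NeZero d := ⟨by omega⟩
  set η := ε * log 2 / 2 with hη
  have hη_pos : 0 < η := by positivity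
  obtain ⟨δ, hδ, hentropy⟩ :=
    exists_pos_forall_spikeEntropy_sub_lt_sum_negMulLog (ι := Fin d) β hη_pos
  filter_upwards [eventually_ge_atTop 1, hN.eventually_gt_atTop 0,
    eventually_add_le_of_tendsto_pow_div hβ hN hratio,
    eventually_forall_mem_Icc_abs_div_sub_lt hN hratio (NeZero.ne d) hδ,
    (tendsto_pow_add_mul_log_div hN hratio).eventually_lt_const (lt_add_of_pos_right _ hη_pos)]
    with a ha hNa hle hclose hlog
  have hNa' : (0 : ℝ) < N a := Nat.cast_pos.2 hNa
  obtain ⟨μ, hμ, hne, hcard, hparts⟩ := exists_isDadicDist_memDiv_bounds hd ha hle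
  refine ⟨μ, hμ, hne, rhoDiv_le (by positivity) fun S hS => ?_⟩
  obtain ⟨j₀, hj₀⟩ := hparts S hS
  have hsum : ∑ j, (#(S j) : ℝ) / N a = 1 := by
    rw [← sum_div, div_eq_one_iff_eq hNa'.ne']
    exact_mod_cast hS.1.sum_card
  have hH := hentropy (fun j => #(S j) / N a) j₀ hsum fun j hj => hclose _ (hj₀ j hj)
  rw [Fintype.card_fin] at hH
  rw [div_lt_iff₀ hNa'] at hlog
  refine (rhoType_le_exp hS.1.sum_card hcard).trans ?_
  rw [rpow_def_of_pos two_pos, exp_le_exp]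
  push_cast
  calc (d ^ a + d) * log d + d * (log (N a) / 2 + 1) -
        N a * ∑ j, negMulLog (#(S j) / N a)
      ≤ (d * β * log d + η) * N a - N a * (spikeEntropy d β - η) := by gcongr
    _ = log 2 * ((fdFun d β + ε) * N a) := by
      linear_combination (-N a : ℝ) * fdFun_mul_log_two d β + 2 * (N a : ℝ) * hη

end Asymptotics

theorem rhoDiv_upper_general (d : ℕ) (hd : 2 ≤ d) (β : ℝ) (hβ₁ : 0 < β) (hβ₂ : β ≤ 1 / (d : ℝ)) :
    ∀ ε > (0 : ℝ), ∃ A : ℕ, ∀ a : ℕ, A ≤ a → ∀ n : ℕ,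
      n = Nat.floor ((d : ℝ) ^ a / ((d : ℝ) * β)) →
      ∃ μ : Fin n → ℝ, IsDadicDist d n μ ∧ (∃ i j, μ i ≠ μ j) ∧
        rhoDiv d n μ ≤ (2 : ℝ) ^ ((fdFun d β + ε) * n) := by
  intro ε hε
  have : NeZero d := ⟨by omega⟩
  have hd0 : (0 : ℝ) < d := Nat.cast_pos.2 (NeZero.pos d)
  obtain rfl | hlt := hβ₂.eq_or_lt
  · refine ⟨2, fun a ha n hn => ?_⟩
    rw [mul_one_div_cancel hd0.ne', div_one, ← Nat.cast_pow, Nat.floor_natCast] at hn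
    obtain ⟨μ, hμ, hne⟩ := exists_isDadicDist_ne (hn ▸ lt_self_pow₀ hd (by omega))
    refine ⟨μ, hμ, hne, (rhoDiv_le_one μ).trans (one_le_rpow one_le_two ?_)⟩
    rw [fdFun_one_div, zero_add]
    positivity
  · have hd1 : (1 : ℝ) < d := by exact_mod_cast hd
    have hdβ : 0 < d * β := mul_pos hd0 hβ₁
    obtain ⟨A, hA⟩ := eventually_atTop.1 <| eventually_exists_rhoDiv_le hd
      ((lt_div_iff₀' hd0).1 hlt) hε (tendsto_floor_pow_div_atTop hd1 hdβ)
      (tendsto_pow_div_floor hd1 hdβ)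
    exact ⟨A, fun a ha n hn => hn ▸ hA a ha⟩

/-- Upper bound: for `n = ⌊d^a/(d·β)⌋` with `a` large, there is a non-constant `d`-adic
distribution `μ` on `X_n` with `ρ(Div(μ)) ≤ 2^{(f_d(β)+ε)n}`. -/
theorem rhoDiv_upper (d : ℕ) (hd : 2 ≤ d) (β : ℝ)
    (hβ₁ : 1 / ((d : ℝ) ^ 2 + 1) ≤ β) (hβ₂ : β ≤ 1 / (d : ℝ)) :
    ∀ ε > (0 : ℝ), ∃ A : ℕ, ∀ a : ℕ, A ≤ a → ∀ n : ℕ,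
      n = Nat.floor ((d : ℝ) ^ a / ((d : ℝ) * β)) →
      ∃ μ : Fin n → ℝ, IsDadicDist d n μ ∧ (∃ i j, μ i ≠ μ j) ∧
        rhoDiv d n μ ≤ (2 : ℝ) ^ ((fdFun d β + ε) * n) :=
  rhoDiv_upper_general d hd β (lt_of_lt_of_le (by positivity) hβ₁) hβ₂
end
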